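/- Let T be an incomplete table over schema R and let σ : X →sp Y be a strongly possible functional dependency for some X, Y ⊆ R. Then g₃(σ) ≥ g₅(σ), where g₃(σ) is the minimum ratio |S|/|T| over subsets S of the tuples of T such that T∖S satisfies X →sp Y, and g₅(σ) is the minimum ratio |S|/|T| over multisets S of tuples such that T∪S (with active domains computed in the enlarged table) satisfies X →sp Y. -/

import Mathlib

/-- A tuple over schema `R`: assigns to each attribute either a value (`some v`)
or the missing value `⊥` (`none`). -/
abbrev Tuple (R : Type) := R → Option ℕ

/-- Tuples `t₁`, `t₂` are weakly similar on `X ⊆ R`. -/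
def weaklySimilarOn {R : Type} (X : Set R) (t₁ t₂ : Tuple R) : Prop :=
  ∀ A ∈ X, t₁ A = t₂ A ∨ t₁ A = none ∨ t₂ A = none

/-- Active domain of attribute `A` in table `T` (a table is a finite multiset of
tuples, encoded as a function from a finite index type `ι`). -/
def VD {R ι : Type} (T : ι → Tuple R) (A : R) : Set ℕ :=
  {v | ∃ i, T i A = some v}

/-- `T'` is a strongly possible world of `T`: a total table, tuple-wise weakly
similar to `T`, with all values taken from active domains of `T`. -/
def IsSpWorld {R ι : Type} (T : ι → Tuple R) (T' : ι → R → ℕ) : Prop :=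
  ∀ i A, (T i A = none ∨ T i A = some (T' i A)) ∧ T' i A ∈ VD T A

/-- `K` is a strongly possible key of `T`: some spWorld has pairwise distinct
`K`-projections. -/
def spKey {R ι : Type} (T : ι → Tuple R) (K : Set R) : Prop :=
  ∃ T', IsSpWorld T T' ∧ ∀ i j : ι, (∀ A ∈ K, T' i A = T' j A) → i = j

/-- The strongly possible functional dependency `X →sp Y` holds in `T`. -/
def spFD {R ι : Type} (T : ι → Tuple R) (X Y : Set R) : Prop :=
  ∃ T', IsSpWorld T T' ∧
    ∀ i j : ι, (∀ A ∈ X, T' i A = T' j A) → ∀ A ∈ Y, T' i A = T' j A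

/-- A family `𝒦` of key candidates is satisfied simultaneously in one spWorld. -/
def spKeySystem {R ι : Type} (T : ι → Tuple R) (𝒦 : Set (Set R)) : Prop :=
  ∃ T', IsSpWorld T T' ∧ ∀ K ∈ 𝒦, ∀ i j : ι, (∀ A ∈ K, T' i A = T' j A) → i = j

/-- `t` is `K`-total: no `⊥` in any attribute of `K`. -/
def KTotal {R : Type} (K : Set R) (t : Tuple R) : Prop := ∀ A ∈ K, t A ≠ none

/-- Minimum number of tuples to remove from `T` so that `sp⟨K⟩` holds. -/
noncomputable def g3KeyNum {R ι : Type} (T : ι → Tuple R) (K : Set R) : ℕ :=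
  sInf {k : ℕ | ∃ S : Finset ι, S.card = k ∧
      spKey (fun i : {i : ι // i ∉ S} => T i.1) K}

/-- `g₃(K)`: the minimum ratio `|S|/|T|` over subsets `S` of the tuples of `T`
whose removal makes `sp⟨K⟩` hold. -/
noncomputable def g3Key {R ι : Type} [Fintype ι] (T : ι → Tuple R) (K : Set R) : ℚ :=
  (g3KeyNum T K : ℚ) / (Fintype.card ι : ℚ)

/-- Minimum number of tuples to add to `T` so that `sp⟨K⟩` holds. -/
noncomputable def g5KeyNum {R ι : Type} (T : ι → Tuple R) (K : Set R) : ℕ :=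
  sInf {p : ℕ | ∃ S : Fin p → Tuple R, spKey (Sum.elim T S) K}

/-- `g₅(K)`: the minimum ratio `|S|/|T|` over multisets `S` of added tuples such
that `T ∪ S` satisfies `sp⟨K⟩` (active domains taken in the enlarged table). -/
noncomputable def g5Key {R ι : Type} [Fintype ι] (T : ι → Tuple R) (K : Set R) : ℚ :=
  (g5KeyNum T K : ℚ) / (Fintype.card ι : ℚ)

/-- Minimum number of tuples to remove from `T` so that `X →sp Y` holds. -/
noncomputable def g3FDNum {R ι : Type} (T : ι → Tuple R) (X Y : Set R) : ℕ :=
  sInf {k : ℕ | ∃ S : Finset ι, S.card = k ∧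
      spFD (fun i : {i : ι // i ∉ S} => T i.1) X Y}

/-- `g₃(σ)` for an spFD `σ : X →sp Y`. -/
noncomputable def g3FD {R ι : Type} [Fintype ι] (T : ι → Tuple R) (X Y : Set R) : ℚ :=
  (g3FDNum T X Y : ℚ) / (Fintype.card ι : ℚ)

/-- Minimum number of tuples to add to `T` so that `X →sp Y` holds. -/
noncomputable def g5FDNum {R ι : Type} (T : ι → Tuple R) (X Y : Set R) : ℕ :=
  sInf {p : ℕ | ∃ S : Fin p → Tuple R, spFD (Sum.elim T S) X Y}

/-- `g₅(σ)` for an spFD `σ : X →sp Y`. -/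
noncomputable def g5FD {R ι : Type} [Fintype ι] (T : ι → Tuple R) (X Y : Set R) : ℚ :=
  (g5FDNum T X Y : ℚ) / (Fintype.card ι : ℚ)

/-- Minimum number of tuples to remove from `T` so that `sp⟨𝒦⟩` holds. -/
noncomputable def g3SysNum {R ι : Type} (T : ι → Tuple R) (𝒦 : Set (Set R)) : ℕ :=
  sInf {k : ℕ | ∃ S : Finset ι, S.card = k ∧
      spKeySystem (fun i : {i : ι // i ∉ S} => T i.1) 𝒦}

/-- `g₃(𝒦)` for a system `𝒦` of strongly possible keys. -/
noncomputable def g3Sys {R ι : Type} [Fintype ι] (T : ι → Tuple R) (𝒦 : Set (Set R)) : ℚ :=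
  (g3SysNum T 𝒦 : ℚ) / (Fintype.card ι : ℚ)

/-- Adjacency in the `K`-extension graph: the (`K`-total) tuple `f` over
`∏_{A ∈ K} VD(A)` is weakly similar to `t` on `K`. -/
def adjExt {R : Type} (K : Set R) (t : Tuple R) (f : ↥K → ℕ) : Prop :=
  ∀ A : ↥K, t A.1 = none ∨ t A.1 = some (f A)

/-- The `T'`-side vertex class of the `K`-extension graph of `T`: the `K`-total
tuples over `∏_{A ∈ K} VD(A)` weakly similar on `K` to at least one tuple of `T`. -/
def extSide {R ι : Type} (T : ι → Tuple R) (K : Set R) : Set (↥K → ℕ) :=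
  {f | (∀ A : ↥K, f A ∈ VD T A.1) ∧ ∃ i, adjExt K (T i) f}

/-- A matching of the `K`-extension bipartite graph of `T`. -/
def IsExtMatching {R ι : Type} (T : ι → Tuple R) (K : Set R)
    (M : Finset (ι × (↥K → ℕ))) : Prop :=
  (∀ e ∈ M, e.2 ∈ extSide T K ∧ adjExt K (T e.1) e.2) ∧
  (∀ e ∈ M, ∀ e' ∈ M, e.1 = e'.1 → e = e') ∧
  (∀ e ∈ M, ∀ e' ∈ M, e.2 = e'.2 → e = e')

/-- `ν(G)`: the maximum size of a matching in the `K`-extension graph of `T`. -/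
noncomputable def nuExt {R ι : Type} (T : ι → Tuple R) (K : Set R) : ℕ :=
  sSup {n : ℕ | ∃ M : Finset (ι × (↥K → ℕ)), IsExtMatching T K M ∧ M.card = n}

/-- `ℓ(t)`: the number of `K`-total tuples in `∏_{A ∈ K} VD(A)` weakly similar
to `t` on `K` (the degree of `t` in the `K`-extension graph). -/
noncomputable def ellK {R ι : Type} (T : ι → Tuple R) (K : Set R) (t : Tuple R) : ℕ :=
  Set.ncard {f : ↥K → ℕ | (∀ A : ↥K, f A ∈ VD T A.1) ∧ adjExt K t f}

/-- `T_j*`: the set of `K`-total tuples over `∏_{A ∈ K} VD(A)` weakly similar on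
`K` to some tuple among the first `j` tuples of `T`. -/
def TjStar {R : Type} {m : ℕ} (T : Fin m → Tuple R) (K : Set R) (j : ℕ) : Set (↥K → ℕ) :=
  {f | (∀ A : ↥K, f A ∈ VD T A.1) ∧ ∃ i : Fin m, i.1 < j ∧ adjExt K (T i) f}

/-- `ν(G*)`: the maximum matching size of the subgraph of the `K`-extension
graph induced on `T_j ∪ T_j*`. -/
noncomputable def nuExtStar {R : Type} {m : ℕ} (T : Fin m → Tuple R) (K : Set R) (j : ℕ) : ℕ :=
  sSup {n : ℕ | ∃ M : Finset (Fin m × (↥K → ℕ)), IsExtMatching T K M ∧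
    (∀ e ∈ M, e.1.1 < j ∧ e.2 ∈ TjStar T K j) ∧ M.card = n}

/-!
Let `W` satisfy `X → Y` and be an spWorld of `T` without the rows in `S`, and let `V` be any
completion of all of `T` satisfying `X → Y`, possibly with values outside the active domains. Such a
`V` exists as soon as some added tuples make `X →sp Y` hold. For every `s ∈ S` add one tuple whose
`X`-entries are fresh values `z s`. The rows of the enlarged table are then completed as follows.

* A row outside `S` whose `W`-completion differs on `X` from every `X`-total row of `S` keeps it.
* An `X`-total row that agrees on `X` with a row of `S` is completed by `V`. Values outside the
  enlarged active domains are replaced by a default, which cannot affect its `X`-entries.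
* For `s ∈ S`, the row `s` itself if it is not `X`-total, and the rows outside `S` that are not
  `X`-total and whose `W`-completion agrees on `X` with `s`, get `z s` in place of their missing
  `X`-entries. The added tuple of `s` carries the `Y`-entries that these rows share.

Completions of different kinds, or with different fresh values, never agree on `X`. If `X = ∅`,
fresh `X`-entries separate nothing, and copies of a row of `V` are added instead.
-/

open Set

variable {R ι κ : Type} {T : ι → Tuple R} {X Y : Set R} {S : Set ι} {F G : Set (R → ℕ)}
  {z q V : ι → R → ℕ} {D : R → Set ℕ} {t : Tuple R} {u w d : R → ℕ}

/-- The functional dependency `X → Y` for a set `F` of total tuples. Multiplicities are irrelevant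
to a functional dependency, so a total table is represented by the set of its rows. -/
def FDOn (F : Set (R → ℕ)) (X Y : Set R) : Prop :=
  ∀ u ∈ F, ∀ v ∈ F, EqOn u v X → EqOn u v Y

/-- The total tuple `u` completes `t`, with values not restricted to any active domain. -/
def IsCompletion (t : Tuple R) (u : R → ℕ) : Prop :=
  ∀ A, t A = none ∨ t A = some (u A)

/-- The completion of `t` that takes its missing values from `d`. -/
def fill (t : Tuple R) (d : R → ℕ) : R → ℕ :=
  fun A => (t A).getD (d A)

theorem isCompletion_fill (t : Tuple R) (d : R → ℕ) : IsCompletion t (fill t d) := by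
  intro A
  cases h : t A <;> simp [fill, h]

theorem fill_of_eq_none {A : R} (h : t A = none) : fill t d A = d A := by
  simp [fill, h]

theorem IsCompletion.eq_some {A : R} (hu : IsCompletion t u) (h : t A ≠ none) :
    t A = some (u A) :=
  (hu A).resolve_left h

theorem fill_eq_or_mem_VD (T : ι → Tuple R) (i : ι) (d : R → ℕ) (A : R) :
    fill (T i) d A = d A ∨ fill (T i) d A ∈ VD T A := by
  by_cases h : T i A = none
  · exact .inl (fill_of_eq_none h)
  · exact .inr ⟨i, (isCompletion_fill _ d).eq_some h⟩

theorem fdOn_range {W : ι → R → ℕ} :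
    FDOn (range W) X Y ↔ ∀ i j, EqOn (W i) (W j) X → EqOn (W i) (W j) Y := by
  simp only [FDOn, forall_mem_range]

theorem FDOn.mono (hG : FDOn G X Y) (hFG : F ⊆ G) : FDOn F X Y :=
  fun u hu v hv => hG u (hFG hu) v (hFG hv)

theorem FDOn.union (hF : FDOn F X Y) (hG : FDOn G X Y)
    (hFG : ∀ u ∈ F, ∀ v ∈ G, ¬ EqOn u v X) : FDOn (F ∪ G) X Y := by
  rintro u (hu | hu) v (hv | hv) huv
  · exact hF u hu v hv huv
  · exact absurd huv (hFG u hu v hv)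
  · exact absurd huv.symm (hFG v hv u hu)
  · exact hG u hu v hv huv

theorem spFD_iff_exists_fdOn :
    spFD T X Y ↔ ∃ F, FDOn F X Y ∧
      ∀ i, ∃ u ∈ F, IsCompletion (T i) u ∧ ∀ A, u A ∈ VD T A := by
  constructor
  · rintro ⟨W, hW, hFD⟩
    exact ⟨range W, fdOn_range.2 hFD,
      fun i => ⟨W i, mem_range_self i, fun A => (hW i A).1, fun A => (hW i A).2⟩⟩
  · rintro ⟨F, hF, hcover⟩
    choose W hWF hW hWD using hcover
    exact ⟨W, fun i A => ⟨hW i A, hWD i A⟩, fun i j => hF _ (hWF i) _ (hWF j)⟩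

theorem VD_comp_of_surjective {e : κ → ι} (he : e.Surjective) (A : R) :
    VD (T ∘ e) A = VD T A := by
  ext v
  exact (he.exists (p := fun i => T i A = some v)).symm

theorem spFD.comp_surjective (h : spFD T X Y) {e : κ → ι} (he : e.Surjective) :
    spFD (T ∘ e) X Y := by
  obtain ⟨W, hW, hFD⟩ := h
  refine ⟨W ∘ e, fun k A => ⟨(hW (e k) A).1, ?_⟩, fun k l => hFD (e k) (e l)⟩
  rw [VD_comp_of_surjective he]
  exact (hW (e k) A).2

theorem VD_subset_VD_sumElim (T : ι → Tuple R) (P : κ → Tuple R) (A : R) :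
    VD T A ⊆ VD (Sum.elim T P) A :=
  fun _ ⟨i, hi⟩ => ⟨Sum.inl i, hi⟩

theorem finite_VD [Finite ι] (T : ι → Tuple R) (A : R) : (VD T A).Finite :=
  Finite.preimage (f := some) (Option.some_injective ℕ).injOn (finite_range fun i => T i A)

/-- In every column, `z` assigns to the rows of `T` pairwise distinct values outside the active
domain. -/
def IsFresh (T : ι → Tuple R) (z : ι → R → ℕ) : Prop :=
  ∀ A, (Function.Injective fun i => z i A) ∧ ∀ i, z i A ∉ VD T A

theorem exists_isFresh [Finite ι] (T : ι → Tuple R) : ∃ z, IsFresh T z := by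
  have exists_column (A : R) : ∃ f : ι → ℕ, Function.Injective f ∧ ∀ i, f i ∉ VD T A := by
    have := (finite_VD T A).infinite_compl.to_subtype
    obtain ⟨n, ⟨e⟩⟩ := Finite.exists_equiv_fin ι
    let f : ι ↪ ↥(VD T A)ᶜ := e.toEmbedding.trans (Fin.valEmbedding.trans (Infinite.natEmbedding _))
    exact ⟨fun i => f i, Subtype.val_injective.comp f.injective, fun i => (f i).2⟩
  choose f hf using exists_column
  exact ⟨fun i A => f A i, hf⟩

/-- The total tuples of `F` that agree on `X` with no row of `S`. -/
def keptRows (T : ι → Tuple R) (S : Set ι) (X : Set R) (F : Set (R → ℕ)) : Set (R → ℕ) :=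
  {w ∈ F | ∀ s ∈ S, ¬ EqOn (T s) (some ∘ w) X}

open Classical in
/-- The tuple `v` with entries outside the domains `D` replaced by the least element of the domain
(which is the junk value `0` if the domain is empty). -/
noncomputable def clampTo (D : R → Set ℕ) (v : R → ℕ) : R → ℕ :=
  fun A => if v A ∈ D A then v A else sInf (D A)

theorem clampTo_of_mem {v : R → ℕ} {A : R} (h : v A ∈ D A) : clampTo D v A = v A :=
  if_pos h

theorem clampTo_mem {A : R} (hD : (D A).Nonempty) (v : R → ℕ) : clampTo D v A ∈ D A := by
  by_cases h : v A ∈ D A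
  · rwa [clampTo_of_mem h]
  · simpa only [clampTo, if_neg h] using Nat.sInf_mem hD

theorem clampTo_congr {v v' : R → ℕ} {A : R} (h : v A = v' A) : clampTo D v A = clampTo D v' A := by
  unfold clampTo
  rw [h]

theorem isCompletion_clampTo {i : ι} (hu : IsCompletion (T i) u) (hD : ∀ A, VD T A ⊆ D A) :
    IsCompletion (T i) (clampTo D u) := by
  intro A
  refine (hu A).imp_right fun h => ?_
  rwa [clampTo_of_mem (hD A ⟨i, h⟩)]

/-- The completions by `V`, clamped to `D`, of the `X`-total rows that agree on `X` with a row
of `S`. -/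
def contestedRows (T : ι → Tuple R) (S : Set ι) (X : Set R) (V : ι → R → ℕ) (D : R → Set ℕ) :
    Set (R → ℕ) :=
  {u | ∃ i, KTotal X (T i) ∧ (∃ s ∈ S, EqOn (T s) (T i) X) ∧ u = clampTo D (V i)}

/-- The total tuples that are recognised on `X` by a fresh value `z s`, their other `X`-entries
being `z s` or active, and that follow `q s` on the rest of `Y`. -/
def reroutedRows (T : ι → Tuple R) (X Y : Set R) (z q : ι → R → ℕ) : Set (R → ℕ) :=
  {u | ∃ s, (∃ A ∈ X, u A = z s A) ∧ (∀ A ∈ X, u A = z s A ∨ u A ∈ VD T A) ∧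
    EqOn u (q s) (Y \ X)}

theorem IsCompletion.eqOn_some_clampTo {i : ι} (hu : IsCompletion (T i) u)
    (hD : ∀ A, VD T A ⊆ D A) (hi : KTotal X (T i)) :
    EqOn (T i) (some ∘ clampTo D u) X :=
  fun A hA => (isCompletion_clampTo hu hD).eq_some (hi A hA)

theorem fdOn_contestedRows (hV : ∀ i, IsCompletion (T i) (V i)) (hVFD : FDOn (range V) X Y)
    (hD : ∀ A, VD T A ⊆ D A) : FDOn (contestedRows T S X V D) X Y := by
  rintro _ ⟨i, hi, -, rfl⟩ _ ⟨j, hj, -, rfl⟩ hij A hA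
  refine clampTo_congr (fdOn_range.1 hVFD i j (fun B hB => ?_) hA)
  apply Option.some_injective
  calc some (V i B) = T i B := ((hV i).eq_some (hi B hB)).symm
    _ = some (clampTo D (V i) B) := (hV i).eqOn_some_clampTo hD hi hB
    _ = some (clampTo D (V j) B) := by rw [hij hB]
    _ = T j B := ((hV j).eqOn_some_clampTo hD hj hB).symm
    _ = some (V j B) := (hV j).eq_some (hj B hB)

theorem fdOn_reroutedRows (hz : IsFresh T z) : FDOn (reroutedRows T X Y z q) X Y := by
  rintro u ⟨s, ⟨A, hA, huA⟩, -, hus⟩ v ⟨s', -, hvX, hvs⟩ huv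
  have hvA : v A = z s A := (huv hA).symm.trans huA
  obtain rfl : s = s' := by
    rcases hvX A hA with h | h
    · exact (hz A).1 (hvA.symm.trans h)
    · exact absurd (hvA ▸ h) ((hz A).2 s)
  intro B hB
  by_cases hBX : B ∈ X
  · exact huv hBX
  · exact (hus ⟨hB, hBX⟩).trans (hvs ⟨hB, hBX⟩).symm

theorem not_eqOn_keptRows_contestedRows (hV : ∀ i, IsCompletion (T i) (V i))
    (hD : ∀ A, VD T A ⊆ D A) :
    ∀ u ∈ keptRows T S X F, ∀ v ∈ contestedRows T S X V D, ¬ EqOn u v X := by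
  rintro u ⟨-, hu⟩ _ ⟨i, hi, ⟨s, hs, hsi⟩, rfl⟩ huv
  exact hu s hs ((hsi.trans ((hV i).eqOn_some_clampTo hD hi)).trans (huv.symm.comp_left))

theorem not_eqOn_reroutedRows (hz : IsFresh T z) (hu : ∀ A ∈ X, u A ∈ VD T A) :
    ∀ v ∈ reroutedRows T X Y z q, ¬ EqOn u v X := by
  rintro v ⟨s, ⟨A, hA, hvA⟩, -⟩ huv
  exact (hz A).2 s (hvA ▸ huv hA ▸ hu A hA)

theorem fdOn_kept_union_contested_union_rerouted (hz : IsFresh T z)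
    (hF : FDOn F X Y) (hFT : ∀ w ∈ F, ∀ A, w A ∈ VD T A)
    (hV : ∀ i, IsCompletion (T i) (V i)) (hVFD : FDOn (range V) X Y) (hD : ∀ A, VD T A ⊆ D A) :
    FDOn (keptRows T S X F ∪ contestedRows T S X V D ∪ reroutedRows T X Y z q) X Y := by
  have kept_contested : FDOn (keptRows T S X F ∪ contestedRows T S X V D) X Y :=
    (hF.mono (sep_subset _ _)).union (fdOn_contestedRows hV hVFD hD)
      (not_eqOn_keptRows_contestedRows hV hD)
  refine kept_contested.union (fdOn_reroutedRows hz) fun u hu => not_eqOn_reroutedRows hz ?_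
  rcases hu with ⟨huF, -⟩ | ⟨i, hi, -, rfl⟩
  · exact fun A _ => hFT u huF A
  · exact fun A hA => ⟨i, (hV i).eqOn_some_clampTo hD hi hA⟩

theorem exists_mem_reroutedRows {i s : ι} (hi : ¬ KTotal X (T i)) (hw : IsCompletion (T i) w)
    (hwq : EqOn w (q s) (Y \ X)) (hwD : ∀ A ∉ X, w A ∈ D A) (hzD : ∀ A ∈ X, z s A ∈ D A)
    (hD : ∀ A, VD T A ⊆ D A) :
    ∃ u ∈ reroutedRows T X Y z q, IsCompletion (T i) u ∧ ∀ A, u A ∈ D A := by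
  classical
  have eqOn_fill := X.piecewise_eqOn (fill (T i) (z s)) w
  have eqOn_w := X.piecewise_eqOn_compl (fill (T i) (z s)) w
  refine ⟨X.piecewise (fill (T i) (z s)) w, ⟨s, ?_, fun A hA => ?_, fun A hA => ?_⟩,
    fun A => ?_, fun A => ?_⟩
  · obtain ⟨A, hA, hiA⟩ : ∃ A ∈ X, T i A = none := by simpa [KTotal] using hi
    exact ⟨A, hA, (eqOn_fill hA).trans (fill_of_eq_none hiA)⟩
  · rw [eqOn_fill hA]
    exact fill_eq_or_mem_VD T i (z s) A
  · exact (eqOn_w hA.2).trans (hwq hA)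
  · by_cases hA : A ∈ X
    · rw [eqOn_fill hA]
      exact isCompletion_fill (T i) (z s) A
    · rw [eqOn_w hA]
      exact hw A
  · by_cases hA : A ∈ X
    · rw [eqOn_fill hA]
      rcases fill_eq_or_mem_VD T i (z s) A with h | h
      · exact h ▸ hzD A hA
      · exact hD A h
    · rw [eqOn_w hA]
      exact hwD A hA

theorem FDOn.exists_eqOn_of_eqOn_some (hF : FDOn F X Y) (t : Tuple R) (d : R → ℕ) :
    ∃ p, (¬ KTotal X t → p = fill t d) ∧ ∀ w ∈ F, EqOn t (some ∘ w) X → EqOn w p Y := by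
  by_cases h : ∃ w ∈ F, EqOn t (some ∘ w) X
  · obtain ⟨w₀, hw₀F, hw₀⟩ := h
    refine ⟨w₀, fun ht => absurd (fun A hA => by simp [hw₀ hA]) ht, fun w hwF hw => ?_⟩
    have hww₀ : EqOn (some ∘ w) (some ∘ w₀) X := hw.symm.trans hw₀
    exact hF w hwF w₀ hw₀F fun A hA => Option.some_injective ℕ (hww₀ hA)
  · exact ⟨fill t d, fun _ => rfl, fun w hwF hw => absurd ⟨w, hwF, hw⟩ h⟩

open Classical in
/-- The tuple added for row `s`: fresh on `X`, so that rerouted rows may use `z s` anywhere on `X`,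
and equal to `q s` elsewhere. -/
noncomputable def addedRow (X : Set R) (z q : ι → R → ℕ) (s : ι) : R → ℕ :=
  X.piecewise (z s) (q s)

theorem addedRow_of_mem {A : R} (s : ι) (hA : A ∈ X) : addedRow X z q s A = z s A := by
  classical exact X.piecewise_eq_of_mem _ _ hA

theorem addedRow_of_notMem {A : R} (s : ι) (hA : A ∉ X) : addedRow X z q s A = q s A := by
  classical exact X.piecewise_eq_of_notMem _ _ hA

theorem addedRow_mem_reroutedRows (hX : X.Nonempty) (s : ι) :
    addedRow X z q s ∈ reroutedRows T X Y z q := by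
  obtain ⟨A₀, hA₀⟩ := hX
  exact ⟨s, ⟨A₀, hA₀, addedRow_of_mem s hA₀⟩, fun A hA => .inl (addedRow_of_mem s hA),
    fun A hA => addedRow_of_notMem s hA.2⟩

theorem exists_mem_contested_union_rerouted {s : ι} (hs : s ∈ S) (hV : IsCompletion (T s) (V s))
    (hq : ¬ KTotal X (T s) → q s = fill (T s) (z s)) (hD : ∀ A, VD T A ⊆ D A)
    (hadded : ∀ A, addedRow X z q s A ∈ D A) :
    ∃ u ∈ contestedRows T S X V D ∪ reroutedRows T X Y z q,
      IsCompletion (T s) u ∧ ∀ A, u A ∈ D A := by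
  by_cases hsX : KTotal X (T s)
  · exact ⟨clampTo D (V s), .inl ⟨s, hsX, ⟨s, hs, eqOn_refl _ _⟩, rfl⟩,
      isCompletion_clampTo hV hD, fun A => clampTo_mem ⟨_, hadded A⟩ _⟩
  · have hqD : ∀ A ∉ X, q s A ∈ D A := fun A hA => by
      simpa only [addedRow_of_notMem s hA] using hadded A
    obtain ⟨u, hu, huD⟩ := exists_mem_reroutedRows hsX
      (hq hsX ▸ isCompletion_fill (T s) (z s)) (eqOn_refl _ _) hqD
      (fun A hA => addedRow_of_mem s hA ▸ hadded A) hD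
    exact ⟨u, .inr hu, huD⟩

theorem exists_mem_kept_union_contested_union_rerouted {i : ι} (hwF : w ∈ F)
    (hw : IsCompletion (T i) w) (hwT : ∀ A, w A ∈ VD T A) (hV : IsCompletion (T i) (V i))
    (hq : ∀ s, EqOn (T s) (some ∘ w) X → EqOn w (q s) Y) (hD : ∀ A, VD T A ⊆ D A)
    (hadded : ∀ s ∈ S, ∀ A, addedRow X z q s A ∈ D A) :
    ∃ u ∈ keptRows T S X F ∪ contestedRows T S X V D ∪ reroutedRows T X Y z q,
      IsCompletion (T i) u ∧ ∀ A, u A ∈ D A := by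
  have hwD : ∀ A, w A ∈ D A := fun A => hD A (hwT A)
  by_cases hkept : ∀ s ∈ S, ¬ EqOn (T s) (some ∘ w) X
  · exact ⟨w, .inl (.inl ⟨hwF, hkept⟩), hw, hwD⟩
  push Not at hkept
  obtain ⟨s, hs, hsw⟩ := hkept
  by_cases hiX : KTotal X (T i)
  · have hsi : EqOn (T s) (T i) X := fun A hA => (hsw hA).trans (hw.eq_some (hiX A hA)).symm
    exact ⟨clampTo D (V i), .inl (.inr ⟨i, hiX, ⟨s, hs, hsi⟩, rfl⟩),
      isCompletion_clampTo hV hD, fun A => clampTo_mem ⟨_, hwD A⟩ _⟩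
  · obtain ⟨u, hu, huD⟩ := exists_mem_reroutedRows hiX hw ((hq s hsw).mono sdiff_subset)
      (fun A _ => hwD A) (fun A hA => addedRow_of_mem s hA ▸ hadded s hs A) hD
    exact ⟨u, .inr hu, huD⟩

theorem exists_spFD_sumElim_of_nonempty [Finite ι] (hX : X.Nonempty)
    (hS : spFD (fun i : {i // i ∉ S} => T i) X Y) (hV : ∀ i, IsCompletion (T i) (V i))
    (hVFD : FDOn (range V) X Y) : ∃ P : S → Tuple R, spFD (Sum.elim T P) X Y := by
  obtain ⟨z, hz⟩ := exists_isFresh T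
  obtain ⟨W, hW, hWFD⟩ := hS
  have hWT (i) (A) : W i A ∈ VD T A := by
    obtain ⟨j, hj⟩ := (hW i A).2
    exact ⟨j, hj⟩
  have hF : FDOn (range W) X Y := fdOn_range.2 hWFD
  choose q hq_fill hq_world using fun s => hF.exists_eqOn_of_eqOn_some (T s) (z s)
  let P : S → Tuple R := fun s => some ∘ addedRow X z q s
  have hD := VD_subset_VD_sumElim T P
  have hadded : ∀ s ∈ S, ∀ A, addedRow X z q s A ∈ VD (Sum.elim T P) A :=
    fun s hs A => ⟨Sum.inr ⟨s, hs⟩, rfl⟩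
  refine ⟨P, spFD_iff_exists_fdOn.2 ⟨_, fdOn_kept_union_contested_union_rerouted (S := S) (q := q)
    hz hF (forall_mem_range.2 hWT) hV hVFD hD, ?_⟩⟩
  rintro (i | ⟨s, hs⟩)
  · by_cases hi : i ∈ S
    · obtain ⟨u, hu, huD⟩ := exists_mem_contested_union_rerouted hi (hV i) (hq_fill i) hD
        (hadded i hi)
      exact ⟨u, hu.imp_left .inr, huD⟩
    · have hWi : W ⟨i, hi⟩ ∈ range W := mem_range_self _
      exact exists_mem_kept_union_contested_union_rerouted hWi (fun A => (hW ⟨i, hi⟩ A).1)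
        (hWT ⟨i, hi⟩) (hV i) (fun s => hq_world s _ hWi) hD hadded
  · exact ⟨addedRow X z q s, .inr (addedRow_mem_reroutedRows hX s), fun A => .inr rfl,
      hadded s hs⟩

theorem spFD_sumElim_const_of_empty [Nonempty κ] (hV : ∀ i, IsCompletion (T i) (V i))
    (hVFD : FDOn (range V) ∅ Y) (i₀ : ι) :
    spFD (Sum.elim T fun _ : κ => some ∘ V i₀) ∅ Y := by
  have active (A) : V i₀ A ∈ VD (Sum.elim T fun _ : κ => some ∘ V i₀) A :=
    ⟨Sum.inr (Classical.arbitrary κ), rfl⟩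
  refine spFD_iff_exists_fdOn.2 ⟨{u | EqOn u (V i₀) Y}, fun u hu v hv _ => hu.trans hv.symm, ?_⟩
  rintro (i | k)
  · refine ⟨fill (T i) (V i₀), fun A hA => ?_, isCompletion_fill _ _, fun A => ?_⟩
    · by_cases h : T i A = none
      · exact fill_of_eq_none h
      · have hfill := (isCompletion_fill (T i) (V i₀)).eq_some h
        rw [(hV i).eq_some h] at hfill
        rw [← Option.some_injective ℕ hfill]
        exact fdOn_range.1 hVFD i i₀ (eqOn_empty _ _) hA
    · rcases fill_eq_or_mem_VD T i (V i₀) A with h | h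
      · exact h ▸ active A
      · exact VD_subset_VD_sumElim T _ A h
  · exact ⟨V i₀, eqOn_refl _ _, fun A => .inr rfl, active⟩

theorem exists_spFD_sumElim_of_spFD_compl [Finite ι]
    (hS : spFD (fun i : {i // i ∉ S} => T i) X Y) (hV : ∀ i, IsCompletion (T i) (V i))
    (hVFD : FDOn (range V) X Y) : ∃ P : S → Tuple R, spFD (Sum.elim T P) X Y := by
  rcases X.eq_empty_or_nonempty with rfl | hX
  · rcases S.eq_empty_or_nonempty with rfl | ⟨s, hs⟩
    · let e : ι ⊕ (∅ : Set ι) → {i // i ∉ (∅ : Set ι)} :=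
        Sum.elim (fun i => ⟨i, notMem_empty i⟩) isEmptyElim
      have he : e.Surjective := fun i => ⟨Sum.inl i, rfl⟩
      refine ⟨isEmptyElim, ?_⟩
      convert hS.comp_surjective he using 1
      ext (i | i)
      · rfl
      · exact isEmptyElim i
    · have : Nonempty S := ⟨s, hs⟩
      exact ⟨_, spFD_sumElim_const_of_empty hV hVFD s⟩
  · exact exists_spFD_sumElim_of_nonempty hX hS hV hVFD

theorem g5FDNum_le_natCard [Finite κ] {P : κ → Tuple R} (h : spFD (Sum.elim T P) X Y) :
    g5FDNum T X Y ≤ Nat.card κ := by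
  let e : Fin (Nat.card κ) ≃ κ := (Finite.equivFin κ).symm
  have he : (Sum.map id e : ι ⊕ Fin (Nat.card κ) → ι ⊕ κ).Surjective :=
    Function.surjective_id.sumMap e.surjective
  refine Nat.sInf_le ⟨P ∘ e, ?_⟩
  simpa only [Sum.elim_comp_map, Function.comp_id] using h.comp_surjective he

-- If no added tuples make `X →sp Y` hold, then `g5FDNum` is `sInf ∅ = 0`.
theorem g5FDNum_eq_zero_of_forall_not_fdOn
    (h : ∀ V : ι → R → ℕ, (∀ i, IsCompletion (T i) (V i)) → ¬ FDOn (range V) X Y) :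
    g5FDNum T X Y = 0 := by
  refine Nat.sInf_eq_zero.2 (.inr (eq_empty_iff_forall_notMem.2 ?_))
  rintro p ⟨P, U, hU, hFD⟩
  exact h (fun i => U (Sum.inl i)) (fun i A => (hU (Sum.inl i) A).1)
    (fdOn_range.2 fun i j => hFD (Sum.inl i) (Sum.inl j))

theorem exists_card_eq_g3FDNum [Finite ι] (T : ι → Tuple R) (X Y : Set R) :
    ∃ S : Finset ι, S.card = g3FDNum T X Y ∧ spFD (fun i : {i // i ∉ S} => T i) X Y := by
  have := Fintype.ofFinite ι
  have spFD_remove_univ : spFD (fun i : {i : ι // i ∉ Finset.univ} => T i) X Y :=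
    ⟨fun _ _ => 0, fun i => absurd (Finset.mem_univ _) i.2, fun i => absurd (Finset.mem_univ _) i.2⟩
  have removals_nonempty : {k | ∃ S : Finset ι, S.card = k ∧
      spFD (fun i : {i // i ∉ S} => T i) X Y}.Nonempty := ⟨_, Finset.univ, rfl, spFD_remove_univ⟩
  exact Nat.sInf_mem removals_nonempty

theorem g5FDNum_le_g3FDNum [Finite ι] (T : ι → Tuple R) (X Y : Set R) :
    g5FDNum T X Y ≤ g3FDNum T X Y := by
  by_cases hT : ∃ V : ι → R → ℕ, (∀ i, IsCompletion (T i) (V i)) ∧ FDOn (range V) X Y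
  · obtain ⟨V, hV, hVFD⟩ := hT
    obtain ⟨S, hcard, hS⟩ := exists_card_eq_g3FDNum T X Y
    obtain ⟨P, hP⟩ := exists_spFD_sumElim_of_spFD_compl (S := S) hS hV hVFD
    calc g5FDNum T X Y ≤ Nat.card S := g5FDNum_le_natCard hP
      _ = S.card := Nat.card_eq_finsetCard S
      _ = g3FDNum T X Y := hcard
  · push Not at hT
    exact (g5FDNum_eq_zero_of_forall_not_fdOn hT).trans_le (Nat.zero_le _)

theorem stmt3_general {R ι : Type} [Fintype ι] (T : ι → Tuple R) (X Y : Set R) :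
    g5FD T X Y ≤ g3FD T X Y :=
  div_le_div_of_nonneg_right (Nat.cast_le.2 (g5FDNum_le_g3FDNum T X Y)) (Nat.cast_nonneg _)

/-- For any spFD `σ : X →sp Y`, `g₃(σ) ≥ g₅(σ)`. -/
theorem stmt3 {R ι : Type} [Fintype R] [Fintype ι] (T : ι → Tuple R) (X Y : Set R) :
    g5FD T X Y ≤ g3FD T X Y := by
  exact stmt3_general T X Y
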